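/- Let R be a commutative unital ℂ-algebra of finite dimension n as a ℂ-vector space. Consider the linear maps Φ_Q^A : Λ²R ⊗ R ⊗ R* → R ⊗ R* defined by (a ∧ a') ⊗ b ⊗ γ ↦ (ab) ⊗ γ(a'·) − (a'b) ⊗ γ(a·), and K^{A,C} : Λ²R ⊗ R* → R ⊗ R* defined by (a ∧ a') ⊗ γ ↦ a ⊗ γ(a'·) − a' ⊗ γ(a·). Then Φ_Q^A and K^{A,C} have equal images, and their common rank equals n(n−1). -/

import Mathlib

/-!
Both images equal the kernel of the action map `μ : R ⊗ R* → R*`, `a ⊗ γ ↦ γ(a·)`.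
Commutativity of `R` gives `μ ∘ Φ = 0` and `μ ∘ K = 0`, so both images lie in `ker μ`. Conversely,
`(a ∧ 1) ⊗ γ` (respectively `(a ∧ 1) ⊗ 1 ⊗ γ`) is sent to `a ⊗ γ - 1 ⊗ γ(a·)`, so each image
contains `x - 1 ⊗ μ x` for every `x`, hence contains `ker μ`. Finally `μ` is surjective, because
`μ (1 ⊗ γ) = γ`, and rank-nullity gives `dim ker μ = n² - n`.
-/

set_option synthInstance.maxHeartbeats 1000000
set_option maxHeartbeats 2000000

open TensorProduct

noncomputable section

namespace KKF

/-- The linear map on the `n`-th exterior power induced by an alternating map. -/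
def extLift {M N : Type} [AddCommGroup M] [Module ℂ M] [AddCommGroup N] [Module ℂ N]
    (n : ℕ) (f : M [⋀^Fin n]→ₗ[ℂ] N) : (⋀[ℂ]^n M) →ₗ[ℂ] N :=
  (ExteriorAlgebra.liftAlternating
    (Function.update (fun i => (0 : M [⋀^Fin i]→ₗ[ℂ] N)) n f)).comp (Submodule.subtype _)

variable {V U W X Y N : Type} [AddCommGroup V] [Module ℂ V] [AddCommGroup U] [Module ℂ U]
  [AddCommGroup W] [Module ℂ W] [AddCommGroup X] [Module ℂ X] [AddCommGroup Y] [Module ℂ Y]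
  [AddCommGroup N] [Module ℂ N]

/-- A bilinear map `V → V → N`, as a multilinear map on `Fin 2 → V`. -/
def multi2ₗ : (V →ₗ[ℂ] V →ₗ[ℂ] N) →ₗ[ℂ] MultilinearMap ℂ (fun _ : Fin 2 => V) N :=
  ((multilinearCurryLeftEquiv (R := ℂ) (M := fun _ : Fin 2 => V) (M₂ := N)).symm.toLinearMap).comp
    (LinearMap.llcomp ℂ V (V →ₗ[ℂ] N) (MultilinearMap ℂ (fun _ : Fin 1 => V) N)
      (MultilinearMap.ofSubsingletonₗ ℂ ℂ V N (0 : Fin 1)).toLinearMap)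

/-- A trilinear map `V → V → V → N`, as a multilinear map on `Fin 3 → V`. -/
def multi3 (f : V →ₗ[ℂ] V →ₗ[ℂ] V →ₗ[ℂ] N) : MultilinearMap ℂ (fun _ : Fin 3 => V) N :=
  LinearMap.uncurryLeft (M := fun _ : Fin 3 => V) (multi2ₗ.comp f)

/-- The trilinear map `(v₁, v₂, v₃) ↦ v₁ ⊗ v₂ ⊗ v₃`, in curried form. -/
def tmul3 : V →ₗ[ℂ] V →ₗ[ℂ] V →ₗ[ℂ] (V ⊗[ℂ] (V ⊗[ℂ] V)) :=
  (LinearMap.lcomp ℂ (V →ₗ[ℂ] (V ⊗[ℂ] (V ⊗[ℂ] V))) (TensorProduct.mk ℂ V V)).comp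
    ((LinearMap.llcomp ℂ V (V ⊗[ℂ] V) (V ⊗[ℂ] (V ⊗[ℂ] V))).comp
      (TensorProduct.mk ℂ V (V ⊗[ℂ] V)))

/-- The antisymmetrizer `Λ²V → V ⊗ V`, `v ∧ v' ↦ v ⊗ v' − v' ⊗ v`. -/
def antisym2 : (⋀[ℂ]^2 V) →ₗ[ℂ] (V ⊗[ℂ] V) :=
  extLift 2 (MultilinearMap.alternatization (multi2ₗ (TensorProduct.mk ℂ V V)))

/-- The antisymmetrizer `Λ³V → V ⊗ V ⊗ V`,
`v₁ ∧ v₂ ∧ v₃ ↦ Σ_{σ ∈ S₃} sgn σ • v_{σ(1)} ⊗ v_{σ(2)} ⊗ v_{σ(3)}`. -/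
def antisym3 : (⋀[ℂ]^3 V) →ₗ[ℂ] (V ⊗[ℂ] (V ⊗[ℂ] V)) :=
  extLift 3 (MultilinearMap.alternatization (multi3 tmul3))

/-- The Koszul flattening gadget: from a bilinear pairing `P`, the linear map
`Λ²V ⊗ W → V ⊗ X`, `(v ∧ v') ⊗ w ↦ v ⊗ P v' w − v' ⊗ P v w`. -/
def koszulGadget (P : V →ₗ[ℂ] W →ₗ[ℂ] X) :
    ((⋀[ℂ]^2 V) ⊗[ℂ] W) →ₗ[ℂ] (V ⊗[ℂ] X) :=
  (LinearMap.lTensor V (TensorProduct.lift P)).comp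
    (((TensorProduct.assoc ℂ V V W).toLinearMap).comp
      (LinearMap.rTensor W (antisym2 (V := V))))

/-- The quadratic (Kronecker-Koszul) flattening gadget: from bilinear pairings `P`, `Q`,
the linear map `Λ²V ⊗ U ⊗ W → X ⊗ Y`,
`((v ∧ v') ⊗ u) ⊗ w ↦ P v u ⊗ Q v' w − P v' u ⊗ Q v w`. -/
def quadGadget (P : V →ₗ[ℂ] U →ₗ[ℂ] X) (Q : V →ₗ[ℂ] W →ₗ[ℂ] Y) :
    (((⋀[ℂ]^2 V) ⊗[ℂ] U) ⊗[ℂ] W) →ₗ[ℂ] (X ⊗[ℂ] Y) :=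
  (TensorProduct.map (TensorProduct.lift P) (TensorProduct.lift Q)).comp
    (((TensorProduct.tensorTensorTensorComm ℂ V V U W).toLinearMap).comp
      (((TensorProduct.assoc ℂ (V ⊗[ℂ] V) U W).toLinearMap).comp
        (LinearMap.rTensor W (LinearMap.rTensor U (antisym2 (V := V))))))

/-- The rank of a linear map: the dimension of its image. -/
def rank {M N : Type} [AddCommGroup M] [Module ℂ M] [AddCommGroup N] [Module ℂ N]
    (f : M →ₗ[ℂ] N) : ℕ :=
  Module.finrank ℂ (LinearMap.range f)

/-- For a commutative `ℂ`-algebra `R`, the bilinear map `R → R* → R*`,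
`(a, γ) ↦ γ(a·)`, i.e. the contraction of the structure tensor of `R` giving `T(a, γ) ∈ R*`. -/
def mulDual (R : Type) [CommRing R] [Algebra ℂ R] :
    R →ₗ[ℂ] Module.Dual ℂ R →ₗ[ℂ] Module.Dual ℂ R :=
  (Module.Dual.transpose (R := ℂ)).comp (LinearMap.mul ℂ R)


theorem extLift_ιMulti {M N : Type} [AddCommGroup M] [Module ℂ M] [AddCommGroup N] [Module ℂ N]
    (n : ℕ) (f : M [⋀^Fin n]→ₗ[ℂ] N) (v : Fin n → M) :
    extLift n f (exteriorPower.ιMulti ℂ n v) = f v := by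
  simp [extLift, ExteriorAlgebra.liftAlternating_apply_ιMulti]

theorem antisym2_ιMulti (v : Fin 2 → V) :
    antisym2 (exteriorPower.ιMulti ℂ 2 v) = v 0 ⊗ₜ[ℂ] v 1 - v 1 ⊗ₜ[ℂ] v 0 := by
  rw [antisym2, extLift_ιMulti, MultilinearMap.alternatization_apply,
    show (Finset.univ : Finset (Equiv.Perm (Fin 2))) = {1, Equiv.swap 0 1} by decide,
    Finset.sum_pair (by decide)]
  simp [multi2ₗ, sub_eq_add_neg, Fin.tail]

theorem koszulGadget_ιMulti (P : V →ₗ[ℂ] W →ₗ[ℂ] X) (v : Fin 2 → V) (w : W) :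
    koszulGadget P (exteriorPower.ιMulti ℂ 2 v ⊗ₜ w) =
      v 0 ⊗ₜ P (v 1) w - v 1 ⊗ₜ P (v 0) w := by
  simp [koszulGadget, antisym2_ιMulti, TensorProduct.sub_tmul]

theorem quadGadget_ιMulti (P : V →ₗ[ℂ] U →ₗ[ℂ] X) (Q : V →ₗ[ℂ] W →ₗ[ℂ] Y) (v : Fin 2 → V)
    (u : U) (w : W) :
    quadGadget P Q ((exteriorPower.ιMulti ℂ 2 v ⊗ₜ u) ⊗ₜ w) =
      P (v 0) u ⊗ₜ Q (v 1) w - P (v 1) u ⊗ₜ Q (v 0) w := by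
  simp [quadGadget, antisym2_ιMulti, TensorProduct.sub_tmul]

/-- The action map `μ : R ⊗ R* → R*`, `a ⊗ γ ↦ γ(a·)`. -/
def actionMap (R : Type) [CommRing R] [Algebra ℂ R] :
    (R ⊗[ℂ] Module.Dual ℂ R) →ₗ[ℂ] Module.Dual ℂ R :=
  TensorProduct.lift (mulDual R)

section

variable (R : Type) [CommRing R] [Algebra ℂ R]

@[simp]
theorem mulDual_apply (a : R) (γ : Module.Dual ℂ R) (x : R) : mulDual R a γ x = γ (a * x) := rfl

theorem mulDual_one (γ : Module.Dual ℂ R) : mulDual R 1 γ = γ := by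
  ext x
  simp

@[simp]
theorem actionMap_tmul (a : R) (γ : Module.Dual ℂ R) :
    actionMap R (a ⊗ₜ γ) = mulDual R a γ := rfl

/-- Every element of the kernel of the action map is a combination of `a ⊗ γ - 1 ⊗ γ(a·)`. -/
theorem ker_actionMap_le (p : Submodule ℂ (R ⊗[ℂ] Module.Dual ℂ R))
    (h : ∀ (a : R) (γ : Module.Dual ℂ R), a ⊗ₜ γ - 1 ⊗ₜ mulDual R a γ ∈ p) :
    LinearMap.ker (actionMap R) ≤ p := by
  have key : ∀ x, x - 1 ⊗ₜ actionMap R x ∈ p := by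
    intro x
    induction x with
    | zero => simp
    | tmul a γ => exact h a γ
    | add x y hx hy =>
      rw [map_add, TensorProduct.tmul_add, add_sub_add_comm]
      exact p.add_mem hx hy
  intro x hx
  simpa [LinearMap.mem_ker.mp hx] using key x

theorem range_koszulGadget :
    LinearMap.range (koszulGadget (mulDual R)) = LinearMap.ker (actionMap R) := by
  apply le_antisymm
  · rw [LinearMap.range_le_ker_iff]
    ext v γ x
    simp [koszulGadget_ιMulti, mul_left_comm]
  · refine ker_actionMap_le R _ fun a γ => ⟨exteriorPower.ιMulti ℂ 2 ![a, 1] ⊗ₜ γ, ?_⟩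
    simp [koszulGadget_ιMulti, mulDual_one]

theorem range_quadGadget :
    LinearMap.range (quadGadget (LinearMap.mul ℂ R) (mulDual R)) =
      LinearMap.ker (actionMap R) := by
  apply le_antisymm
  · rw [LinearMap.range_le_ker_iff]
    -- `ext` does not reach the exterior power under two tensor factors unless `N` is given
    refine TensorProduct.ext (TensorProduct.ext (exteriorPower.linearMap_ext
      (N := R →ₗ[ℂ] Module.Dual ℂ R →ₗ[ℂ] Module.Dual ℂ R) ?_))
    ext v b γ x
    simp [quadGadget_ιMulti, mul_assoc, mul_left_comm]
  · refine ker_actionMap_le R _ fun a γ => ⟨(exteriorPower.ιMulti ℂ 2 ![a, 1] ⊗ₜ 1) ⊗ₜ γ, ?_⟩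
    simp [quadGadget_ιMulti, mulDual_one]

theorem finrank_ker_actionMap [FiniteDimensional ℂ R] :
    Module.finrank ℂ (LinearMap.ker (actionMap R)) =
      Module.finrank ℂ R * (Module.finrank ℂ R - 1) := by
  have hsurj : LinearMap.range (actionMap R) = ⊤ :=
    LinearMap.range_eq_top.mpr fun γ => ⟨1 ⊗ₜ γ, mulDual_one R γ⟩
  have h := LinearMap.finrank_range_add_finrank_ker (actionMap R)
  rw [hsurj, finrank_top, Module.finrank_tensorProduct, Subspace.dual_finrank_eq] at h
  rw [Nat.mul_sub_one, ← h, Nat.add_sub_cancel_left]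

end

/-- For an `n`-dimensional commutative unital `ℂ`-algebra `R`, the quadratic flattening
`Φ_Q^A : Λ²R ⊗ R ⊗ R* → R ⊗ R*`, `(a ∧ a') ⊗ b ⊗ γ ↦ (ab) ⊗ γ(a'·) − (a'b) ⊗ γ(a·)`,
and the Koszul flattening `K^{A,C} : Λ²R ⊗ R* → R ⊗ R*`,
`(a ∧ a') ⊗ γ ↦ a ⊗ γ(a'·) − a' ⊗ γ(a·)`, have equal images, and their common rank
equals `n(n−1)`. -/
theorem statement10 (R : Type) [CommRing R] [Algebra ℂ R] [FiniteDimensional ℂ R]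
    (n : ℕ) (hn : Module.finrank ℂ R = n) :
    LinearMap.range (quadGadget (LinearMap.mul ℂ R) (mulDual R)) =
      LinearMap.range (koszulGadget (mulDual R)) ∧
    Module.finrank ℂ (LinearMap.range (quadGadget (LinearMap.mul ℂ R) (mulDual R))) = n * (n - 1) := by
  rw [range_quadGadget, range_koszulGadget, finrank_ker_actionMap, hn]
  exact ⟨rfl, rfl⟩

end KKF
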